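/- Every finite feasible set L of links (under any power assignment) contains a subset W with |W| ≥ |L|/2 such that W is 2-bi-feasible, i.e., a_W(u) ≤ 2 and a_u(W) ≤ 2 for every u ∈ W. -/

import Mathlib

open Finset MeasureTheory
open scoped Classical

/-- A wireless link: an ordered sender–receiver pair of points in a metric space. -/
structure Link (X : Type*) where
  sender : X
  receiver : X

variable {X : Type*} [MetricSpace X]

/-- The length `ℓ_v` of a link. -/
noncomputable def linkLen (v : Link X) : ℝ := dist v.sender v.receiver

/-- The asymmetric distance `d_{wv}` from the sender of `w` to the receiver of `v`. -/
noncomputable def linkDist (w v : Link X) : ℝ := dist w.sender v.receiver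

/-- The constant `c_v = β/(1 - β N ℓ_v^α / P_v)`. -/
noncomputable def cConst (α β N : ℝ) (pw : Link X → ℝ) (v : Link X) : ℝ :=
  β / (1 - β * N * linkLen v ^ α / pw v)

/-- The (thresholded) affectance `a_w(v)` of link `w` on link `v`. -/
noncomputable def aff (α β N : ℝ) (pw : Link X → ℝ) (w v : Link X) : ℝ :=
  if w = v then 0
  else min 1 (cConst α β N pw v * (pw w / pw v) * (linkLen v / linkDist w v) ^ α)

/-- `a_S(v) = Σ_{w ∈ S} a_w(v)`. -/
noncomputable def affIn (α β N : ℝ) (pw : Link X → ℝ) (S : Finset (Link X)) (v : Link X) : ℝ :=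
  ∑ w ∈ S, aff α β N pw w v

/-- `a_v(S) = Σ_{w ∈ S} a_v(w)`. -/
noncomputable def affOut (α β N : ℝ) (pw : Link X → ℝ) (v : Link X) (S : Finset (Link X)) : ℝ :=
  ∑ w ∈ S, aff α β N pw v w

/-- Affectances between links satisfying the noise constraint are nonnegative. -/
lemma aff_nonneg {X : Type*} [MetricSpace X] {α β N : ℝ} {pw : Link X → ℝ} {w v : Link X}
    (hβ : 0 ≤ β) (hw : 0 ≤ pw w) (hv : 0 < pw v) (hnoise : β * N * linkLen v ^ α ≤ pw v) :
    0 ≤ aff α β N pw w v := by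
  unfold aff
  split_ifs
  · exact le_rfl
  · have hc : 0 ≤ cConst α β N pw v :=
      div_nonneg hβ (sub_nonneg.2 ((div_le_one hv).2 hnoise))
    have hd : 0 ≤ linkLen v / linkDist w v := div_nonneg dist_nonneg dist_nonneg
    exact le_min zero_le_one
      (mul_nonneg (mul_nonneg hc (div_nonneg hw hv.le)) (Real.rpow_nonneg hd α))

/-- Markov's inequality for finite sums: if `f ≥ 0` has average at most `1` on `s`, then `f ≤ 2` on
at least half of `s`. -/
lemma half_card_le_card_filter_le_two {ι : Type*} (s : Finset ι) (f : ι → ℝ)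
    (hf : ∀ i ∈ s, 0 ≤ f i) (hsum : ∑ i ∈ s, f i ≤ s.card) :
    (s.card : ℝ) / 2 ≤ (s.filter fun i => f i ≤ 2).card := by
  have hcard : ((s.filter fun i => f i ≤ 2).card : ℝ) + (s.filter fun i => ¬ f i ≤ 2).card
      = s.card := by
    exact_mod_cast s.card_filter_add_card_filter_not (fun i => f i ≤ 2)
  have hlarge : ((s.filter fun i => ¬ f i ≤ 2).card : ℝ) * 2 ≤ ∑ i ∈ s, f i :=
    calc ((s.filter fun i => ¬ f i ≤ 2).card : ℝ) * 2
        = ∑ _i ∈ s.filter fun i => ¬ f i ≤ 2, (2 : ℝ) := by simp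
      _ ≤ ∑ i ∈ s.filter fun i => ¬ f i ≤ 2, f i :=
        sum_le_sum fun i hi => (not_le.1 (mem_filter.1 hi).2).le
      _ ≤ ∑ i ∈ s, f i :=
        sum_le_sum_of_subset_of_nonneg (filter_subset _ _) fun i hi _ => hf i hi
  linarith

/-- Every finite feasible set `L` of links (under any power assignment)
contains a subset `W` with `|W| ≥ |L|/2` that is 2-bi-feasible: `a_W(u) ≤ 2` and
`a_u(W) ≤ 2` for every `u ∈ W`. -/
theorem stmt_6 {X : Type*} [MetricSpace X] (α β N : ℝ) (pw : Link X → ℝ)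
    (L : Finset (Link X))
    (hα : 0 < α) (hβ : 0 < β) (hN : 0 ≤ N)
    (hlen : ∀ v ∈ L, 0 < linkLen v)
    (hpw : ∀ v ∈ L, 0 < pw v)
    (hnoise : ∀ v ∈ L, β * N * linkLen v ^ α < pw v)
    (hdd : ∀ v ∈ L, ∀ w ∈ L, w ≠ v → 0 < linkDist w v)
    (hfeas : ∀ v ∈ L, affIn α β N pw L v ≤ 1) :
    ∃ W ⊆ L, (L.card : ℝ) / 2 ≤ W.card ∧
      (∀ u ∈ W, affIn α β N pw W u ≤ 2) ∧
      (∀ u ∈ W, affOut α β N pw u W ≤ 2) := by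
  have hnn : ∀ w ∈ L, ∀ v ∈ L, 0 ≤ aff α β N pw w v := fun w hw v hv =>
    aff_nonneg hβ.le (hpw w hw).le (hpw v hv) (hnoise v hv).le
  have hsum : ∑ u ∈ L, affOut α β N pw u L ≤ L.card := by
    calc ∑ u ∈ L, affOut α β N pw u L = ∑ v ∈ L, affIn α β N pw L v := sum_comm
      _ ≤ ∑ _v ∈ L, (1 : ℝ) := sum_le_sum hfeas
      _ = L.card := by simp
  have hsub : L.filter (fun u => affOut α β N pw u L ≤ 2) ⊆ L := filter_subset _ _
  refine ⟨L.filter fun u => affOut α β N pw u L ≤ 2, hsub,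
    half_card_le_card_filter_le_two L _ (fun u hu => sum_nonneg (hnn u hu)) hsum,
    fun u hu => ?_, fun u hu => ?_⟩
  · have hin : affIn α β N pw (L.filter fun u => affOut α β N pw u L ≤ 2) u
        ≤ affIn α β N pw L u :=
      sum_le_sum_of_subset_of_nonneg hsub fun w hw _ => hnn w hw u (hsub hu)
    linarith [hfeas u (hsub hu)]
  · exact (sum_le_sum_of_subset_of_nonneg hsub fun w hw _ => hnn u (hsub hu) w hw).trans
      (mem_filter.1 hu).2
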